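/- Let (A,m) be a multiarrangement in V = K^ℓ. For every X ∈ L(A) and every p with 0 ≤ p ≤ r(X), one has C_p(X) = Σ_{Y ∈ L(A_X)_p} C_p(Y), where L(A_X)_p denotes the set of rank-p elements of the intersection lattice of the subarrangement A_X. -/

import Mathlib

/-!
Fix the multiplicity `m`. For a finite set `C` of linear forms let `D^p(C)` be the module of
`p`-derivations `θ` with `θ(α_φ, …) ∈ α_φ^{m(φ)} S` for `φ ∈ C`, and let `c_k(C) ∈ ℤ[[q]]` be the
coefficient of `t^k` in `ψ = ∑_p H(D^p(C),q) (t(q-1)-1)^p`. For a finite set `B` of linear forms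
write `d(B)` for the dimension of its centre `⋂_{φ ∈ B} ker φ`, and put
`g_k(B) = ∑_{C ⊆ B} (-1)^{|C|} c_k(C)`. The key fact is that `g_k(B)` is a polynomial in `q`, and
that its value at `q = 1` vanishes unless `d(B) = k`. Since inclusion–exclusion is an involution,
`c_k(A) = ∑_{B ⊆ A} (-1)^{|B|} g_k(B)` is then a polynomial too, and
`C_p(A) = (-1)^{ℓ-p} ∑_{B ⊆ A, d(B) = ℓ-p} (-1)^{|B|} g_{ℓ-p}(B)|_{q=1}`. Collecting the sets `B` in
this sum for `A_X` according to their centre `Y`, which runs through the elements of rank `p` of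
`L(A_X)`, gives `∑_Y C_p(Y)`, since for such `Y` the `B ⊆ A_Y` with `d(B) = ℓ-p` are exactly
the `B ⊆ A_X` with centre `Y`.

The key fact has two halves.

* Pole order (`sum_hs_Dform_mul_mem_polys`): `∑_{C ⊆ B} (-1)^{|C|} H(D^p(C),q)` has a pole of order at
  most `d(B)` at `q = 1`, so that `g_k(B)`, which carries a factor `(q-1)^k`, is a polynomial for
  `k ≥ d(B)` and vanishes at `q = 1` for `k > d(B)`. The modules `D^p(C)` form a cube, in which
  `α_φ^{m(φ)}` maps `D^p(C)` into `D^p(C ∪ {φ})`. Passing to kernels and cokernels of the cube one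
  direction `φ` at a time makes all `α_φ`, `φ ∈ B`, nilpotent (`cube_mem_polys`), and a
  graded module on which linear forms spanning a space of codimension `d` act nilpotently has a pole
  of order at most `d`, by the Hilbert–Serre argument (`hs_sub_mul_mem_polys`). It is started by
  the Artin–Rees lemma: if all linear forms are nilpotent on `M / N`, then `M` and `N` agree in large
  degrees.
* Divisibility (`sum_hs_mul_eq_zero`): `c_k(C) = 0` for `C ⊆ B` and `k < d(B)`. In each degree,
  if `e₀ ∈ V` is killed by `C` and `x` is a linear form with `x(e₀) = 1`, contraction with `x`
  is split by `e₀ ∧ ·`, which is compatible with the conditions defining `D^p(C)`. Hence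
  `∑_p dim D^p(C)_e y^p` is divisible by `y + 1`, and iterating over a basis of the centre of `B`
  gives divisibility by `(y + 1)^{d(B)}`.

Throughout, `D^p` is replaced by an isomorphic module of alternating forms on the space of linear
forms, since a `p`-derivation is determined by its values on linear forms (`hilb_eq_hs`).
-/

open MvPolynomial

noncomputable section

/-- The linear form (degree-one polynomial) associated to a linear functional on `K^ℓ`. -/
def formPoly {K : Type*} [Field K] {ℓ : ℕ} (φ : Module.Dual K (Fin ℓ → K)) :
    MvPolynomial (Fin ℓ) K :=
  ∑ i : Fin ℓ, MvPolynomial.C (φ (Pi.single i 1)) * MvPolynomial.X i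

/-- A multiarrangement of hyperplanes in `K^ℓ`: a finite set of (pairwise distinct)
hyperplanes, recorded by nonzero defining linear functionals with pairwise distinct
kernels, together with a positive multiplicity attached to each hyperplane. -/
structure MultiArr (K : Type*) [Field K] (ℓ : ℕ) where
  duals : Finset (Module.Dual K (Fin ℓ → K))
  ne_zero : ∀ φ ∈ duals, φ ≠ 0
  distinct_ker : ∀ φ ∈ duals, ∀ ψ ∈ duals, φ ≠ ψ → LinearMap.ker φ ≠ LinearMap.ker ψ
  mult : Module.Dual K (Fin ℓ → K) → ℕ
  mult_pos : ∀ φ ∈ duals, 0 < mult φ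

variable {K : Type*} [Field K] {ℓ : ℕ}

/-- `Der^p(S)`-condition: an alternating `p`-multilinear map is a `K`-derivation in each
variable. -/
def IsMultiDer {p : ℕ}
    (θ : (MvPolynomial (Fin ℓ) K) [⋀^Fin p]→ₗ[K] (MvPolynomial (Fin ℓ) K)) : Prop :=
  ∀ (i : Fin p) (v : Fin p → MvPolynomial (Fin ℓ) K) (f g : MvPolynomial (Fin ℓ) K),
    θ (Function.update v i (f * g)) =
      f * θ (Function.update v i g) + g * θ (Function.update v i f)

/-- The module of `p`-derivations `D^p(𝒜,m)` of a multiarrangement, as a submodule of the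
alternating `p`-multilinear maps (for `p = 0` this is all of `S ≅ Der^0(S)`). -/
def Dp (A : MultiArr K ℓ) (p : ℕ) :
    Submodule (MvPolynomial (Fin ℓ) K)
      ((MvPolynomial (Fin ℓ) K) [⋀^Fin p]→ₗ[K] (MvPolynomial (Fin ℓ) K)) where
  carrier := {θ | IsMultiDer θ ∧ ∀ φ ∈ A.duals, ∀ v : Fin p → MvPolynomial (Fin ℓ) K,
    ∀ i : Fin p, v i = formPoly φ → θ v ∈ Ideal.span {formPoly φ ^ A.mult φ}}
  add_mem' := by
    rintro θ η ⟨hθ, hθ'⟩ ⟨hη, hη'⟩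
    refine ⟨fun i v f g => ?_, fun φ hφ v i hv => ?_⟩
    · simp only [AlternatingMap.add_apply, hθ i v f g, hη i v f g]; ring
    · simpa using add_mem (hθ' φ hφ v i hv) (hη' φ hφ v i hv)
  zero_mem' := by
    refine ⟨fun i v f g => by simp, fun φ hφ v i hv => by simp⟩
  smul_mem' := by
    rintro c θ ⟨hθ, hθ'⟩
    refine ⟨fun i v f g => ?_, fun φ hφ v i hv => ?_⟩
    · simp only [AlternatingMap.smul_apply, smul_eq_mul, hθ i v f g]; ring
    · simpa using Ideal.mul_mem_left _ c (hθ' φ hφ v i hv)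

attribute [local instance] Classical.propDecidable

/-- The subarrangement `(𝒜_X, m_X)`, consisting of the hyperplanes of `𝒜` containing `X`,
with the restricted multiplicity. -/
def restrictArr (A : MultiArr K ℓ) (X : Submodule K (Fin ℓ → K)) : MultiArr K ℓ where
  duals := A.duals.filter (fun φ => X ≤ LinearMap.ker φ)
  ne_zero := fun φ hφ => A.ne_zero φ (Finset.mem_filter.mp hφ).1
  distinct_ker := fun φ hφ ψ hψ =>
    A.distinct_ker φ (Finset.mem_filter.mp hφ).1 ψ (Finset.mem_filter.mp hψ).1
  mult := A.mult
  mult_pos := fun φ hφ => A.mult_pos φ (Finset.mem_filter.mp hφ).1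

/-- The intersection lattice `L(𝒜)`: all intersections of subsets of `𝒜`
(with `V` itself as the empty intersection). -/
def LSet (A : MultiArr K ℓ) : Finset (Submodule K (Fin ℓ → K)) :=
  A.duals.powerset.image fun B => ⨅ φ ∈ B, LinearMap.ker φ

/-- The rank `r(X) = codim_V X` of a subspace `X ⊆ V = K^ℓ`. -/
def rk {K : Type*} [Field K] {ℓ : ℕ} (X : Submodule K (Fin ℓ → K)) : ℕ :=
  ℓ - Module.finrank K X

/-- A `p`-derivation is homogeneous of (polynomial) degree `d` if all the values
`θ(x_{i_1},…,x_{i_p})` are homogeneous polynomials of degree `d`. -/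
def AltHomog {p : ℕ}
    (θ : (MvPolynomial (Fin ℓ) K) [⋀^Fin p]→ₗ[K] (MvPolynomial (Fin ℓ) K)) (d : ℕ) : Prop :=
  ∀ v : Fin p → Fin ℓ, (θ fun j => MvPolynomial.X (v j)).IsHomogeneous d

/-- The degree-`d` graded component of `D^p(𝒜,m)`, as a `K`-subspace. -/
def DpGraded (A : MultiArr K ℓ) (p d : ℕ) :
    Submodule K ((MvPolynomial (Fin ℓ) K) [⋀^Fin p]→ₗ[K] (MvPolynomial (Fin ℓ) K)) where
  carrier := {θ | θ ∈ Dp A p ∧ AltHomog θ d}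
  add_mem' := fun ha hb =>
    ⟨add_mem ha.1 hb.1, fun v => by
      simpa using (ha.2 v).add (hb.2 v)⟩
  zero_mem' := ⟨zero_mem _, fun v => by
    simpa using MvPolynomial.isHomogeneous_zero _ _ d⟩
  smul_mem' := fun c θ hθ => by
    refine ⟨?_, fun v => ?_⟩
    · have : c • θ = (MvPolynomial.C c : MvPolynomial (Fin ℓ) K) • θ := by
        ext v
        simp [MvPolynomial.smul_eq_C_mul]
      rw [this]
      exact Submodule.smul_mem _ _ hθ.1
    · have : (c • θ) (fun j => MvPolynomial.X (v j)) =
        MvPolynomial.C c * θ (fun j => MvPolynomial.X (v j)) := by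
        simp [MvPolynomial.smul_eq_C_mul]
      rw [this]
      simpa using (MvPolynomial.isHomogeneous_C _ c).mul (hθ.2 v)

/-- The Hilbert series `H(D^p(𝒜,m), q) = Σ_d dim_K D^p(𝒜,m)_d qᵈ`. -/
def hilb (A : MultiArr K ℓ) (p : ℕ) : PowerSeries ℤ :=
  PowerSeries.mk fun d => (Module.finrank K (DpGraded A p d) : ℤ)

/-- `ψ(𝒜,m;t,q) = Σ_{p=0}^{ℓ} H(D^p(𝒜,m),q)·(t(q−1)−1)^p`, as a polynomial in `t` with
power-series (in `q`) coefficients. -/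
def psi (A : MultiArr K ℓ) : Polynomial (PowerSeries ℤ) :=
  ∑ p ∈ Finset.range (ℓ + 1), Polynomial.C (hilb A p) *
    (Polynomial.C ((PowerSeries.X : PowerSeries ℤ) - 1) * Polynomial.X - 1) ^ p

/-- The coefficient of `t^k` in `ψ(𝒜,m;t,q)`, expressed as a polynomial in `q`
(this is possible by Theorem `chithm`; junk value `0` otherwise). -/
def psiQCoeff (A : MultiArr K ℓ) (k : ℕ) : Polynomial ℤ :=
  if h : ∃ f : Polynomial ℤ, Polynomial.coeToPowerSeries.ringHom f = (psi A).coeff k then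
    h.choose else 0

/-- The coefficient of `t^k` in `ψ(𝒜,m;t,1)`. -/
def psiAtOne (A : MultiArr K ℓ) (k : ℕ) : ℤ := (psiQCoeff A k).eval 1

/-- `ψ(𝒜,m;t,1)` as a polynomial in `t`. -/
def psiT1Poly (A : MultiArr K ℓ) : Polynomial ℤ :=
  ∑ k ∈ Finset.range (ℓ + 1), Polynomial.C (psiAtOne A k) * Polynomial.X ^ k

/-- The characteristic polynomial `χ((𝒜,m),t) = (−1)^ℓ ψ(𝒜,m;t,1)`. -/
def charPoly (A : MultiArr K ℓ) : Polynomial ℤ := (-1 : ℤ) ^ ℓ • psiT1Poly A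

/-- `C_p`, the coefficient of `t^p` in the Poincaré polynomial
`π((𝒜,m),t) = (−t)^ℓ χ((𝒜,m),−t^{−1})`. -/
def CpCoeff (A : MultiArr K ℓ) (p : ℕ) : ℤ := (-1 : ℤ) ^ (ℓ - p) * psiAtOne A (ℓ - p)

/-- The Poincaré polynomial `π((𝒜,m),t) = (−t)^ℓ χ((𝒜,m),−t^{−1})`. -/
def poinPoly (A : MultiArr K ℓ) : Polynomial ℤ :=
  ∑ p ∈ Finset.range (ℓ + 1), Polynomial.C (CpCoeff A p) * Polynomial.X ^ p

/-! ### Graded modules of alternating forms -/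

/-- The linear forms on `K^ℓ`. -/
abbrev Lin (K : Type*) [Field K] (ℓ : ℕ) := Module.Dual K (Fin ℓ → K)

/-- `K`-alternating `p`-forms on the space of linear forms with values in `S = K[x_1,…,x_ℓ]`:
a coordinate-free model of the free `S`-module `Der^p(S)`, a `p`-derivation being determined by its
values on linear forms. -/
abbrev Alt (K : Type*) [Field K] (ℓ p : ℕ) :=
  (Lin K ℓ) [⋀^Fin p]→ₗ[K] (MvPolynomial (Fin ℓ) K)

/-- `formPoly` as a linear map. -/
def formLin (K : Type*) [Field K] (ℓ : ℕ) : Lin K ℓ →ₗ[K] MvPolynomial (Fin ℓ) K where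
  toFun := formPoly
  map_add' φ ψ := by simp [formPoly, add_mul, Finset.sum_add_distrib]
  map_smul' c φ := by
    simp [formPoly, Finset.smul_sum, MvPolynomial.smul_eq_C_mul, mul_assoc]

lemma formLin_apply (φ : Lin K ℓ) : formLin K ℓ φ = formPoly φ := rfl

/-- The basis of linear forms given by the coordinate functions. -/
def coordBasis (K : Type*) [Field K] (ℓ : ℕ) : Module.Basis (Fin ℓ) K (Lin K ℓ) :=
  (Pi.basisFun K (Fin ℓ)).dualBasis

lemma formPoly_coordBasis (i : Fin ℓ) : formPoly (coordBasis K ℓ i) = X i := by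
  simp [formPoly, coordBasis, Pi.single_apply]

lemma formPoly_eq_zero_iff (φ : Lin K ℓ) : formPoly φ = 0 ↔ φ = 0 := by
  refine ⟨fun h => ?_, fun h => by subst h; simp [formPoly]⟩
  refine LinearMap.pi_ext' fun i => LinearMap.ext_ring ?_
  have := congrArg (MvPolynomial.coeff (Finsupp.single i 1)) h
  simpa [formPoly, MvPolynomial.coeff_sum, MvPolynomial.coeff_C_mul, MvPolynomial.coeff_X,
    Finsupp.single_left_inj] using this

lemma formPoly_isHomogeneous (φ : Lin K ℓ) : (formPoly φ).IsHomogeneous 1 := by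
  refine MvPolynomial.IsHomogeneous.sum _ _ _ fun i _ => ?_
  simpa using (MvPolynomial.isHomogeneous_C _ _).mul (MvPolynomial.isHomogeneous_X K i)

section Graded

attribute [local instance] MvPolynomial.gradedAlgebra

lemma coe_decompose_eq (f : MvPolynomial (Fin ℓ) K) (e : ℕ) :
    (DirectSum.decompose (homogeneousSubmodule (Fin ℓ) K) f e : MvPolynomial (Fin ℓ) K) =
      homogeneousComponent e f :=
  MvPolynomial.decomposition.decompose'_apply f e

lemma homogeneousComponent_mul_left {f g : MvPolynomial (Fin ℓ) K} {n : ℕ}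
    (hf : f.IsHomogeneous n) (e : ℕ) :
    homogeneousComponent (n + e) (f * g) = f * homogeneousComponent e g := by
  have := DirectSum.coe_decompose_mul_add_of_left_mem (homogeneousSubmodule (Fin ℓ) K)
    (i := n) (j := e) (a := f) (b := g) hf
  rwa [coe_decompose_eq, coe_decompose_eq] at this

lemma homogeneousComponent_mul_left_lt {f g : MvPolynomial (Fin ℓ) K} {n e : ℕ}
    (hf : f.IsHomogeneous n) (he : e < n) :
    homogeneousComponent e (f * g) = 0 := by
  have := DirectSum.coe_decompose_mul_of_left_mem_of_not_le (homogeneousSubmodule (Fin ℓ) K)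
    (i := n) (n := e) (a := f) (b := g) hf (by omega)
  rwa [coe_decompose_eq] at this

end Graded

lemma homogeneousComponent_mem_span {f g : MvPolynomial (Fin ℓ) K} {n : ℕ}
    (hf : f.IsHomogeneous n) (hg : g ∈ Ideal.span {f}) (e : ℕ) :
    homogeneousComponent e g ∈ Ideal.span {f} := by
  obtain ⟨h, rfl⟩ := Ideal.mem_span_singleton'.mp hg
  rw [mul_comm]
  rcases lt_or_ge e n with he | he
  · rw [homogeneousComponent_mul_left_lt hf he]; exact zero_mem _
  · obtain ⟨e, rfl⟩ := Nat.exists_eq_add_of_le he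
    rw [homogeneousComponent_mul_left hf]
    exact Ideal.mul_mem_right _ _ (Ideal.mem_span_singleton_self f)

variable {p : ℕ}

instance : IsScalarTower K (MvPolynomial (Fin ℓ) K) (Alt K ℓ p) where
  smul_assoc c f a := by ext1 v; simp

instance : IsNoetherian (MvPolynomial (Fin ℓ) K) (Alt K ℓ p) := by
  let ev : Alt K ℓ p →ₗ[MvPolynomial (Fin ℓ) K] ((Fin p → Fin ℓ) → MvPolynomial (Fin ℓ) K) :=
    { toFun := fun a v => a fun j => coordBasis K ℓ (v j)
      map_add' := fun a b => rfl
      map_smul' := fun c a => rfl }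
  refine isNoetherian_of_injective ev fun a b h => ?_
  exact (coordBasis K ℓ).ext_alternating fun v _ => congrFun h v

/-- Extraction of the component of degree `e` of all values of an alternating form. -/
def comp (e : ℕ) : Alt K ℓ p →ₗ[K] Alt K ℓ p where
  toFun a := (homogeneousComponent e).compAlternatingMap a
  map_add' a b := by ext; simp
  map_smul' c a := by ext; simp

@[simp] lemma comp_apply (e : ℕ) (a : Alt K ℓ p) (v) :
    comp e a v = homogeneousComponent e (a v) := rfl

/-- The space of alternating forms all of whose values are homogeneous of degree `e`. -/
def homog (K : Type*) [Field K] (ℓ p e : ℕ) : Submodule K (Alt K ℓ p) where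
  carrier := {a | ∀ v, (a v).IsHomogeneous e}
  add_mem' ha hb v := (ha v).add (hb v)
  zero_mem' v := MvPolynomial.isHomogeneous_zero _ _ e
  smul_mem' c a ha v := by
    simpa [MvPolynomial.smul_eq_C_mul] using (MvPolynomial.isHomogeneous_C _ c).mul (ha v)

lemma mem_homog {e : ℕ} {a : Alt K ℓ p} : a ∈ homog K ℓ p e ↔ ∀ v, (a v).IsHomogeneous e := Iff.rfl

lemma comp_mem_homog (e : ℕ) (a : Alt K ℓ p) : comp e a ∈ homog K ℓ p e := fun v =>
  homogeneousComponent_isHomogeneous e (a v)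

lemma comp_eq_self {e : ℕ} {a : Alt K ℓ p} (ha : a ∈ homog K ℓ p e) : comp e a = a := by
  ext1 v; exact homogeneousComponent_eq_self (ha v)

instance (e : ℕ) : Module.Finite K (homog K ℓ p e) := by
  have : Module.Finite K (homogeneousSubmodule (Fin ℓ) K e) :=
    Module.Finite.iff_fg.mpr (homogeneousSubmodule_fg (Fin ℓ) K e)
  let ev : homog K ℓ p e →ₗ[K] ((Fin p → Fin ℓ) → homogeneousSubmodule (Fin ℓ) K e) :=
    { toFun := fun a v => ⟨a.1 fun j => coordBasis K ℓ (v j), a.2 _⟩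
      map_add' := fun a b => rfl
      map_smul' := fun c a => rfl }
  refine Module.Finite.of_injective ev fun a b h => Subtype.ext ?_
  exact (coordBasis K ℓ).ext_alternating fun v _ => congrArg Subtype.val (congrFun h v)

/-- The degree-`e` part of an `S`-submodule. -/
def gr (M : Submodule (MvPolynomial (Fin ℓ) K) (Alt K ℓ p)) (e : ℕ) : Submodule K (Alt K ℓ p) :=
  M.restrictScalars K ⊓ homog K ℓ p e

lemma mem_gr {M : Submodule (MvPolynomial (Fin ℓ) K) (Alt K ℓ p)} {e : ℕ} {a : Alt K ℓ p} :
    a ∈ gr M e ↔ a ∈ M ∧ a ∈ homog K ℓ p e := Iff.rfl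

instance finite_gr (M : Submodule (MvPolynomial (Fin ℓ) K) (Alt K ℓ p)) (e : ℕ) :
    Module.Finite K (gr M e) :=
  Submodule.finiteDimensional_of_le (inf_le_right : gr M e ≤ homog K ℓ p e)

/-- Homogeneity (gradedness) of an `S`-submodule. -/
def IsGr (M : Submodule (MvPolynomial (Fin ℓ) K) (Alt K ℓ p)) : Prop :=
  ∀ a ∈ M, ∀ e, comp e a ∈ M

/-- The Hilbert series of (the graded part of) an `S`-submodule. -/
def hs (M : Submodule (MvPolynomial (Fin ℓ) K) (Alt K ℓ p)) : PowerSeries ℤ :=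
  PowerSeries.mk fun e => (Module.finrank K (gr M e) : ℤ)

lemma isGr_bot : IsGr (⊥ : Submodule (MvPolynomial (Fin ℓ) K) (Alt K ℓ p)) := by
  intro a ha e
  rw [Submodule.mem_bot] at ha
  simp [ha]

variable {M N : Submodule (MvPolynomial (Fin ℓ) K) (Alt K ℓ p)}

lemma IsGr.inf (hM : IsGr M) (hN : IsGr N) : IsGr (M ⊓ N) := fun a ha e =>
  ⟨hM a ha.1 e, hN a ha.2 e⟩

lemma IsGr.sup (hM : IsGr M) (hN : IsGr N) : IsGr (M ⊔ N) := by
  intro a ha e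
  obtain ⟨b, hb, c, hc, rfl⟩ := Submodule.mem_sup.mp ha
  rw [map_add]
  exact Submodule.add_mem_sup (hM b hb e) (hN c hc e)

lemma gr_sup (hM : IsGr M) (hN : IsGr N) (e : ℕ) : gr (M ⊔ N) e = gr M e ⊔ gr N e := by
  apply le_antisymm
  · rintro a ⟨ha, hae⟩
    obtain ⟨b, hb, c, hc, rfl⟩ := Submodule.mem_sup.mp ha
    rw [← comp_eq_self hae, map_add]
    exact Submodule.add_mem_sup ⟨hM b hb e, comp_mem_homog e b⟩ ⟨hN c hc e, comp_mem_homog e c⟩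
  · refine sup_le (fun a ha => ⟨?_, ha.2⟩) (fun a ha => ⟨?_, ha.2⟩)
    · exact (le_sup_left : M ≤ M ⊔ N) ha.1
    · exact (le_sup_right : N ≤ M ⊔ N) ha.1

lemma gr_inf (e : ℕ) : gr (M ⊓ N) e = gr M e ⊓ gr N e := by
  ext a; simp only [Submodule.mem_inf, mem_gr]; tauto

lemma hs_sup_add_hs_inf (hM : IsGr M) (hN : IsGr N) : hs (M ⊔ N) + hs (M ⊓ N) = hs M + hs N := by
  ext e
  simp only [hs, map_add, PowerSeries.coeff_mk]
  rw [gr_sup hM hN, gr_inf]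
  exact_mod_cast Submodule.finrank_sup_add_finrank_inf_eq (gr M e) (gr N e)

lemma hs_bot : hs (⊥ : Submodule (MvPolynomial (Fin ℓ) K) (Alt K ℓ p)) = 0 := by
  ext e
  have : gr (⊥ : Submodule (MvPolynomial (Fin ℓ) K) (Alt K ℓ p)) e = ⊥ := by
    rw [eq_bot_iff]; intro a ha; exact ha.1
  simp [hs, this]

/-- The submodule `α_φ M`. -/
def mulForm (φ : Lin K ℓ) (M : Submodule (MvPolynomial (Fin ℓ) K) (Alt K ℓ p)) :
    Submodule (MvPolynomial (Fin ℓ) K) (Alt K ℓ p) :=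
  M.map (LinearMap.lsmul (MvPolynomial (Fin ℓ) K) (Alt K ℓ p) (formPoly φ))

lemma mem_mulForm {φ : Lin K ℓ} {a : Alt K ℓ p} :
    a ∈ mulForm φ M ↔ ∃ b ∈ M, formPoly φ • b = a := Iff.rfl

/-- The submodule `{a ∈ M | α_φ a ∈ N}`. -/
def divForm (φ : Lin K ℓ) (M N : Submodule (MvPolynomial (Fin ℓ) K) (Alt K ℓ p)) :
    Submodule (MvPolynomial (Fin ℓ) K) (Alt K ℓ p) :=
  M ⊓ N.comap (LinearMap.lsmul (MvPolynomial (Fin ℓ) K) (Alt K ℓ p) (formPoly φ))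

lemma mem_divForm {φ : Lin K ℓ} {a : Alt K ℓ p} :
    a ∈ divForm φ M N ↔ a ∈ M ∧ formPoly φ • a ∈ N := Iff.rfl

lemma comp_succ_smul (φ : Lin K ℓ) (a : Alt K ℓ p) (e : ℕ) :
    comp (e + 1) (formPoly φ • a) = formPoly φ • comp e a := by
  ext1 v
  simp only [comp_apply, AlternatingMap.smul_apply, smul_eq_mul]
  rw [add_comm, homogeneousComponent_mul_left (formPoly_isHomogeneous φ)]

lemma comp_zero_smul (φ : Lin K ℓ) (a : Alt K ℓ p) :
    comp 0 (formPoly φ • a) = 0 := by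
  ext1 v
  simp only [comp_apply, AlternatingMap.smul_apply, smul_eq_mul]
  rw [homogeneousComponent_mul_left_lt (formPoly_isHomogeneous φ) Nat.zero_lt_one]; rfl

lemma IsGr.mulForm (φ : Lin K ℓ) (hM : IsGr M) : IsGr (mulForm φ M) := by
  rintro a ⟨b, hb, rfl⟩ e
  cases e with
  | zero => simp only [LinearMap.lsmul_apply, comp_zero_smul]; exact zero_mem _
  | succ e =>
    simp only [LinearMap.lsmul_apply, comp_succ_smul]
    exact ⟨_, hM b hb e, rfl⟩

lemma IsGr.divForm (φ : Lin K ℓ) (hM : IsGr M) (hN : IsGr N) : IsGr (divForm φ M N) := by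
  rintro a ⟨ha, ha'⟩ e
  refine ⟨hM a ha e, ?_⟩
  have := hN _ ha' (e + 1)
  rwa [LinearMap.lsmul_apply, comp_succ_smul] at this

lemma smul_form_injective {φ : Lin K ℓ} (hφ : φ ≠ 0) {a b : Alt K ℓ p}
    (h : formPoly φ • a = formPoly φ • b) : a = b := by
  ext1 v
  have := DFunLike.congr_fun h v
  simp only [AlternatingMap.smul_apply, smul_eq_mul] at this
  exact mul_left_cancel₀ (mt (formPoly_eq_zero_iff φ).mp hφ) this

lemma hs_mulForm {φ : Lin K ℓ} (hφ : φ ≠ 0) (hM : IsGr M) :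
    hs (mulForm φ M) = PowerSeries.X * hs M := by
  ext e
  cases e with
  | zero =>
    have : gr (mulForm φ M) 0 = ⊥ := by
      rw [eq_bot_iff]
      rintro a ⟨⟨b, hb, rfl⟩, ha⟩
      rw [← comp_eq_self ha, LinearMap.lsmul_apply, comp_zero_smul]; exact zero_mem _
    simp [hs, this]
  | succ e =>
    simp only [hs, PowerSeries.coeff_mk, PowerSeries.coeff_succ_X_mul]
    have h1 : gr (mulForm φ M) (e + 1) = (gr M e).map
        ((LinearMap.lsmul (MvPolynomial (Fin ℓ) K) (Alt K ℓ p) (formPoly φ)).restrictScalars K) := by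
      ext a
      constructor
      · rintro ⟨⟨b, hb, rfl⟩, ha⟩
        refine ⟨comp e b, ⟨hM b hb e, comp_mem_homog e b⟩, ?_⟩
        conv_rhs => rw [← comp_eq_self ha, LinearMap.lsmul_apply, comp_succ_smul]
        rfl
      · rintro ⟨b, ⟨hb, hb'⟩, rfl⟩
        refine ⟨⟨b, hb, rfl⟩, fun v => ?_⟩
        rw [add_comm]
        exact (formPoly_isHomogeneous φ).mul (hb' v)
    rw [h1, ← (Submodule.equivMapOfInjective _ (fun a b h => smul_form_injective hφ h)
      (gr M e)).finrank_eq]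

/-! ### Order of the pole at `q = 1` -/

/-- The power series over `ℤ` that are polynomials. -/
def polys : Subring (PowerSeries ℤ) :=
  (Polynomial.coeToPowerSeries.ringHom : Polynomial ℤ →+* PowerSeries ℤ).range

lemma X_mem_polys : (PowerSeries.X : PowerSeries ℤ) ∈ polys :=
  ⟨Polynomial.X, by simp⟩

lemma mem_polys_of_coeff_eq_zero {f : PowerSeries ℤ} (n : ℕ)
    (h : ∀ e, n ≤ e → PowerSeries.coeff e f = 0) : f ∈ polys := by
  refine ⟨PowerSeries.trunc n f, ?_⟩
  ext e
  rw [Polynomial.coeToPowerSeries.ringHom_apply, Polynomial.coeff_coe, PowerSeries.coeff_trunc]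
  split_ifs with he
  · rfl
  · exact (h e (not_lt.mp he)).symm

/-- The linear forms acting nilpotently on `M / N`. -/
def nilForms (M N : Submodule (MvPolynomial (Fin ℓ) K) (Alt K ℓ p)) : Submodule K (Lin K ℓ) :=
  (((N.colon (M : Set (Alt K ℓ p))).radical).restrictScalars K).comap (formLin K ℓ)

lemma mem_nilForms {φ : Lin K ℓ} :
    φ ∈ nilForms M N ↔ ∃ n : ℕ, ∀ a ∈ M, formPoly φ ^ n • a ∈ N := by
  change formPoly φ ∈ (N.colon (M : Set (Alt K ℓ p))).radical ↔ _
  rw [Ideal.mem_radical_iff]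
  exact exists_congr fun n => Submodule.mem_colon

lemma nilForms_mono {M' N' : Submodule (MvPolynomial (Fin ℓ) K) (Alt K ℓ p)}
    (hM : M' ≤ M) (hN : N ≤ N') : nilForms M N ≤ nilForms M' N' := by
  intro φ hφ
  obtain ⟨n, hn⟩ := mem_nilForms.mp hφ
  exact mem_nilForms.mpr ⟨n, fun a ha => hN (hn a (hM ha))⟩

lemma mem_nilForms_of_smul_le {φ : Lin K ℓ} (n : ℕ) (h : ∀ a ∈ M, formPoly φ ^ n • a ∈ N) :
    φ ∈ nilForms M N := mem_nilForms.mpr ⟨n, h⟩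

lemma homog_le_pow_smul_top {e : ℕ} {a : Alt K ℓ p} (ha : a ∈ homog K ℓ p e) :
    a ∈ (idealOfVars (Fin ℓ) K ^ e • ⊤ :
      Submodule (MvPolynomial (Fin ℓ) K) (Alt K ℓ p)) := by
  let s : Finset (Fin ℓ →₀ ℕ) := (Finsupp.finite_of_degree_eq e).toFinset
  have key : a = ∑ d ∈ s, (monomial d (1 : K)) •
      ((Algebra.linearMap K (MvPolynomial (Fin ℓ) K)).comp
        (MvPolynomial.lcoeff K d)).compAlternatingMap a := by
    ext v d
    have hsum : ∀ f : (Fin ℓ →₀ ℕ) → Alt K ℓ p, (∑ d ∈ s, f d) v = ∑ d ∈ s, f d v := fun f =>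
      map_sum (⟨⟨fun a : Alt K ℓ p => a v, rfl⟩, fun _ _ => rfl⟩ :
        Alt K ℓ p →+ MvPolynomial (Fin ℓ) K) f s
    simp only [hsum, MvPolynomial.coeff_sum, AlternatingMap.smul_apply,
      LinearMap.compAlternatingMap_apply, LinearMap.comp_apply, Algebra.linearMap_apply,
      smul_eq_mul, MvPolynomial.algebraMap_eq, mul_comm (monomial _ _), C_mul_monomial,
      mul_one, coeff_monomial, Finset.sum_ite_eq', MvPolynomial.lcoeff_apply]
    split_ifs with hd
    · rfl
    · refine (ha v).coeff_eq_zero fun h => hd ?_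
      simpa [s] using h
  rw [key]
  refine Submodule.sum_mem _ fun d hd => Submodule.smul_mem_smul ?_ Submodule.mem_top
  rw [monomial_mem_pow_idealOfVars_iff _ _ one_ne_zero]
  simp only [s, Set.Finite.mem_toFinset, Set.mem_ofPred_eq] at hd
  exact hd.ge

/-- If all linear forms act nilpotently on `M / N`, then `M / N` has finite length: by the
Artin–Rees lemma its graded pieces of large degree vanish. -/
lemma hs_sub_mem_polys_of_nilForms_eq_top (hNM : N ≤ M)
    (h : nilForms M N = ⊤) : hs M - hs N ∈ polys := by
  have hrad : idealOfVars (Fin ℓ) K ≤ (N.colon (M : Set (Alt K ℓ p))).radical := by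
    refine Ideal.span_le.mpr ?_
    rintro _ ⟨i, rfl⟩
    have : coordBasis K ℓ i ∈ nilForms M N := h ▸ Submodule.mem_top
    rw [← formPoly_coordBasis (K := K) i]
    exact this
  obtain ⟨n, hn⟩ := Ideal.exists_pow_le_of_le_radical_of_fg hrad (idealOfVars_fg _ _)
  obtain ⟨k, hk⟩ := Ideal.exists_pow_inf_eq_pow_smul (idealOfVars (Fin ℓ) K) M
  refine mem_polys_of_coeff_eq_zero (k + n) fun e he => ?_
  have hle : gr M e ≤ gr N e := by
    rintro a ⟨haM, hae⟩
    refine ⟨?_, hae⟩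
    have h1 : a ∈ idealOfVars (Fin ℓ) K ^ (k + n) • ⊤ ⊓ M :=
      ⟨Submodule.smul_mono_left (Ideal.pow_le_pow_right he) (homog_le_pow_smul_top hae), haM⟩
    rw [hk _ (by omega), Nat.add_sub_cancel_left] at h1
    refine (Submodule.smul_le.mpr ?_ : _ ≤ N) (Submodule.smul_mono le_rfl inf_le_right h1)
    intro r hr b hb
    exact Submodule.mem_colon.mp (hn hr) b hb
  have heq : gr M e = gr N e := le_antisymm hle fun a ha => ⟨hNM ha.1, ha.2⟩
  rw [map_sub, hs, hs, PowerSeries.coeff_mk, PowerSeries.coeff_mk, heq, sub_self]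

/-- The Hilbert–Serre theorem in the form needed: if a space of linear forms of codimension at most
`d` acts nilpotently on `M / N`, the pole at `q = 1` of its Hilbert series has order at most `d`. -/
lemma hs_sub_mul_mem_polys (d : ℕ) : ∀ (M N : Submodule (MvPolynomial (Fin ℓ) K) (Alt K ℓ p)),
    IsGr M → IsGr N → N ≤ M → ℓ ≤ Module.finrank K (nilForms M N) + d →
    (hs M - hs N) * (1 - PowerSeries.X) ^ d ∈ polys := by
  induction d with
  | zero =>
    intro M N _ _ hNM hd
    rw [pow_zero, mul_one]
    refine hs_sub_mem_polys_of_nilForms_eq_top hNM (Submodule.eq_top_of_finrank_eq ?_)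
    refine le_antisymm (Submodule.finrank_le _) ?_
    simpa using hd
  | succ d ih =>
    intro M N hM hN hNM hd
    by_cases htop : nilForms M N = ⊤
    · refine mul_mem (hs_sub_mem_polys_of_nilForms_eq_top hNM htop) (pow_mem ?_ _)
      exact sub_mem (one_mem _) X_mem_polys
    obtain ⟨φ, hφ⟩ : ∃ φ, φ ∉ nilForms M N := by
      by_contra! h
      exact htop (eq_top_iff.mpr fun φ _ => h φ)
    have hφ0 : φ ≠ 0 := fun h => hφ (h ▸ zero_mem _)
    -- enlarging the space of nilpotent forms by `φ` lowers its codimension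
    have bound : ∀ M' N' : Submodule (MvPolynomial (Fin ℓ) K) (Alt K ℓ p),
        nilForms M N ≤ nilForms M' N' → φ ∈ nilForms M' N' →
        ℓ ≤ Module.finrank K (nilForms M' N') + d := by
      intro M' N' h1 h2
      have : nilForms M N < nilForms M' N' := lt_of_le_of_ne h1 fun h => hφ (h ▸ h2)
      have := Submodule.finrank_lt_finrank_of_lt this
      omega
    have hyM : mulForm φ M ≤ M := by
      rintro _ ⟨b, hb, rfl⟩; exact M.smul_mem _ hb
    have hcoker := ih M (mulForm φ M ⊔ N) hM ((hM.mulForm φ).sup hN) (sup_le hyM hNM)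
      (bound _ _ (nilForms_mono le_rfl le_sup_right)
        (mem_nilForms_of_smul_le 1 fun a ha => by
          rw [pow_one]; exact Submodule.mem_sup_left ⟨a, ha, rfl⟩))
    have hNL : N ≤ divForm φ M N := fun a ha => ⟨hNM ha, N.smul_mem _ ha⟩
    have hker := ih (divForm φ M N) N (hM.divForm φ hN) hN hNL
      (bound _ _ (nilForms_mono inf_le_left le_rfl)
        (mem_nilForms_of_smul_le 1 fun a ha => by rw [pow_one]; exact ha.2))
    have e1 := hs_sup_add_hs_inf (hM.mulForm φ) hN
    have e2 : mulForm φ M ⊓ N = mulForm φ (divForm φ M N) := by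
      ext a
      constructor
      · rintro ⟨⟨b, hb, rfl⟩, ha⟩; exact ⟨b, ⟨hb, ha⟩, rfl⟩
      · rintro ⟨b, ⟨hb, hb'⟩, rfl⟩; exact ⟨⟨b, hb, rfl⟩, hb'⟩
    rw [e2, hs_mulForm hφ0 hM, hs_mulForm hφ0 (hM.divForm φ hN)] at e1
    have : (hs M - hs N) * (1 - PowerSeries.X) ^ (d + 1) =
        (hs M - hs (mulForm φ M ⊔ N)) * (1 - PowerSeries.X) ^ d -
          PowerSeries.X * ((hs (divForm φ M N) - hs N) * (1 - PowerSeries.X) ^ d) := by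
      linear_combination (1 - PowerSeries.X) ^ d * e1
    rw [this]
    exact sub_mem hcoker (mul_mem X_mem_polys hker)

/-- A cube of subquotients `M(C) / N(C)`, indexed by finite sets `C` of linear forms and antitone in
`C`, with multiplication by powers of `α_φ` mapping back from `C` to `C ∪ {φ}`: the alternating sum
over the subsets of `B` behaves like a module on which all forms in `B` act nilpotently. The reason
is that kernels and cokernels in the direction `φ` are again cubes, on which `φ` is nilpotent. -/
lemma cube_mem_polys (m : Lin K ℓ → ℕ) (d : ℕ) (B : Finset (Lin K ℓ)) :
    ∀ (U : Submodule K (Lin K ℓ))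
      (M N : Finset (Lin K ℓ) → Submodule (MvPolynomial (Fin ℓ) K) (Alt K ℓ p)),
    (∀ C, IsGr (M C)) → (∀ C, IsGr (N C)) → (∀ C, N C ≤ M C) →
    (∀ φ C, M (insert φ C) ≤ M C) → (∀ φ C, N (insert φ C) ≤ N C) →
    (∀ φ C, ∀ a ∈ M C, formPoly φ ^ m φ • a ∈ M (insert φ C)) →
    (∀ φ C, ∀ a ∈ N C, formPoly φ ^ m φ • a ∈ N (insert φ C)) →
    (∀ C, U ≤ nilForms (M C) (N C)) →
    ℓ ≤ Module.finrank K (U ⊔ Submodule.span K (B : Set (Lin K ℓ)) : Submodule K (Lin K ℓ)) + d →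
    (∑ C ∈ B.powerset, (-1) ^ C.card * (hs (M C) - hs (N C))) * (1 - PowerSeries.X) ^ d ∈
      polys := by
  induction B using Finset.induction_on with
  | empty =>
    intro U M N hM hN hNM _ _ _ _ hU hd
    simp only [Finset.powerset_empty, Finset.sum_singleton, Finset.card_empty, pow_zero, one_mul]
    refine hs_sub_mul_mem_polys d _ _ (hM _) (hN _) (hNM _) (hd.trans ?_)
    gcongr
    exact Submodule.finrank_mono (by simpa using hU ∅)
  | insert φ B hφ ih =>
    intro U M N hM hN hNM aM aN bM bN hU hd
    have hd' : ℓ ≤ Module.finrank K (U ⊔ Submodule.span K {φ} ⊔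
        Submodule.span K (B : Set (Lin K ℓ)) : Submodule K (Lin K ℓ)) + d := by
      rwa [sup_assoc, ← Submodule.span_union, Set.singleton_union, ← Finset.coe_insert]
    have hcoker := ih (U ⊔ Submodule.span K {φ}) M (fun C => M (insert φ C) ⊔ N C) hM
      (fun C => (hM _).sup (hN _)) (fun C => sup_le (aM _ _) (hNM _)) aM
      (fun ψ C => sup_le_sup (by rw [Finset.insert_comm]; exact aM _ _) (aN _ _)) bM
      (fun ψ C a ha => by
        obtain ⟨b, hb, c, hc, rfl⟩ := Submodule.mem_sup.mp ha
        rw [smul_add, Finset.insert_comm]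
        exact Submodule.add_mem_sup (bM _ _ _ hb) (bN _ _ _ hc))
      (fun C => sup_le ((hU C).trans (nilForms_mono le_rfl le_sup_right))
        (Submodule.span_le.mpr (Set.singleton_subset_iff.mpr
          (mem_nilForms_of_smul_le (m φ) fun a ha => Submodule.mem_sup_left (bM _ _ _ ha))))) hd'
    have hker := ih (U ⊔ Submodule.span K {φ}) (fun C => M (insert φ C) ⊓ N C)
      (fun C => N (insert φ C)) (fun C => (hM _).inf (hN _)) (fun C => hN _)
      (fun C => le_inf (hNM _) (aN _ _))
      (fun ψ C => inf_le_inf (by rw [Finset.insert_comm]; exact aM _ _) (aN _ _))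
      (fun ψ C => by rw [Finset.insert_comm]; exact aN _ _)
      (fun ψ C a ha => by
        rw [Finset.insert_comm]
        exact ⟨by rw [Finset.insert_comm]; rw [Finset.insert_comm]; exact bM _ _ _ ha.1,
          bN _ _ _ ha.2⟩)
      (fun ψ C a ha => by rw [Finset.insert_comm]; exact bN _ _ _ ha)
      (fun C => sup_le ((hU _).trans (nilForms_mono inf_le_left le_rfl))
        (Submodule.span_le.mpr (Set.singleton_subset_iff.mpr
          (mem_nilForms_of_smul_le (m φ) fun a ha => bN _ _ _ ha.2)))) hd'
    have : ∑ C ∈ (insert φ B).powerset, (-1) ^ C.card * (hs (M C) - hs (N C)) =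
        ∑ C ∈ B.powerset, (-1) ^ C.card * (hs (M C) - hs (M (insert φ C) ⊔ N C)) -
        ∑ C ∈ B.powerset, (-1) ^ C.card * (hs (M (insert φ C) ⊓ N C) - hs (N (insert φ C))) := by
      rw [Finset.sum_powerset_insert hφ, ← Finset.sum_sub_distrib, ← Finset.sum_add_distrib]
      refine Finset.sum_congr rfl fun C hC => ?_
      have hφC : φ ∉ C := fun h => hφ (Finset.mem_powerset.mp hC h)
      rw [Finset.card_insert_of_notMem hφC]
      linear_combination (-1) ^ C.card * hs_sup_add_hs_inf (hM (insert φ C)) (hN C)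
    rw [this, sub_mul]
    exact sub_mem hcoker hker

/-! ### The modules `D^p` as alternating forms -/

lemma formPoly_injective : Function.Injective (formPoly : Lin K ℓ → MvPolynomial (Fin ℓ) K) := by
  intro φ ψ h
  rw [← sub_eq_zero, ← formPoly_eq_zero_iff, ← formLin_apply, map_sub, sub_eq_zero]
  exact h

/-- The model of `D^p(𝒜,m)` in `Alt`: forms `a` such that `a(…, φ, …)` is divisible by
`α_φ^{m(φ)}` for all `φ ∈ C`. -/
def Dform (m : Lin K ℓ → ℕ) (C : Finset (Lin K ℓ)) (p : ℕ) :
    Submodule (MvPolynomial (Fin ℓ) K) (Alt K ℓ p) where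
  carrier := {a | ∀ φ ∈ C, ∀ (v : Fin p → Lin K ℓ) (i : Fin p), v i = φ →
    a v ∈ Ideal.span {formPoly φ ^ m φ}}
  add_mem' ha hb φ hφ v i hv := add_mem (ha φ hφ v i hv) (hb φ hφ v i hv)
  zero_mem' _ _ _ _ _ := zero_mem _
  smul_mem' c _ ha φ hφ v i hv := Ideal.mul_mem_left _ c (ha φ hφ v i hv)

lemma mem_Dform {m : Lin K ℓ → ℕ} {C : Finset (Lin K ℓ)} {a : Alt K ℓ p} :
    a ∈ Dform m C p ↔ ∀ φ ∈ C, ∀ (v : Fin p → Lin K ℓ) (i : Fin p), v i = φ →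
      a v ∈ Ideal.span {formPoly φ ^ m φ} := Iff.rfl

lemma isGr_Dform (m : Lin K ℓ → ℕ) (C : Finset (Lin K ℓ)) : IsGr (Dform m C p) := by
  intro a ha e φ hφ v i hv
  exact homogeneousComponent_mem_span ((formPoly_isHomogeneous φ).pow _) (ha φ hφ v i hv) e

/-- The alternating sum of the Hilbert series of the modules `D^p`, over the subsets of `B`, has a
pole at `q = 1` of order at most the dimension `d` of the common zero set of `B`. -/
lemma sum_hs_Dform_mul_mem_polys (m : Lin K ℓ → ℕ) (B : Finset (Lin K ℓ)) (d : ℕ)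
    (hd : ℓ ≤ Module.finrank K (Submodule.span K (B : Set (Lin K ℓ))) + d) :
    (∑ C ∈ B.powerset, (-1) ^ C.card * hs (Dform m C p)) * (1 - PowerSeries.X) ^ d ∈ polys := by
  have := cube_mem_polys (p := p) m d B ⊥ (fun C => Dform m C p) (fun _ => ⊥)
    (fun C => isGr_Dform m C) (fun _ => isGr_bot) (fun _ => bot_le)
    (fun φ C a ha ψ hψ => ha ψ (Finset.mem_insert_of_mem hψ)) (fun _ _ => le_rfl)
    (fun φ C a ha ψ hψ v i hv => by
      rw [AlternatingMap.smul_apply, smul_eq_mul]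
      rcases Finset.mem_insert.mp hψ with rfl | hψ
      · exact Ideal.mul_mem_right _ _ (Ideal.mem_span_singleton_self _)
      · exact Ideal.mul_mem_left _ _ (ha ψ hψ v i hv))
    (fun φ C a ha => by rw [(Submodule.mem_bot _).mp ha, smul_zero]; exact zero_mem _)
    (fun _ => bot_le) (by rwa [bot_sup_eq])
  simpa only [hs_bot, sub_zero] using this

/-! ### Restriction of multiderivations to linear forms -/

/-- A multiderivation takes values in an ideal `I` as soon as it does so on linear forms; the
arguments in the slots `T` may be held fixed. -/
lemma IsMultiDer.mem_of_forall_forms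
    {θ : (MvPolynomial (Fin ℓ) K) [⋀^Fin p]→ₗ[K] (MvPolynomial (Fin ℓ) K)} (hθ : IsMultiDer θ)
    (I : Ideal (MvPolynomial (Fin ℓ) K)) (T : Finset (Fin p)) (u : Fin p → Lin K ℓ)
    (h : ∀ w : Fin p → Lin K ℓ, (∀ i ∈ T, w i = u i) → θ (fun i => formPoly (w i)) ∈ I)
    (f : Fin p → MvPolynomial (Fin ℓ) K) (hf : ∀ i ∈ T, f i = formPoly (u i)) : θ f ∈ I := by
  have key : ∀ s : Finset (Fin p), Disjoint s T → ∀ f : Fin p → MvPolynomial (Fin ℓ) K,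
      (∀ i ∈ T, f i = formPoly (u i)) → (∀ i ∉ s, i ∉ T → ∃ w : Lin K ℓ, formPoly w = f i) →
      θ f ∈ I := by
    intro s
    induction s using Finset.induction_on with
    | empty =>
      intro _ f hf hw
      have : ∀ i, ∃ w : Lin K ℓ, formPoly w = f i := fun i => by
        by_cases hi : i ∈ T
        · exact ⟨u i, (hf i hi).symm⟩
        · exact hw i (Finset.notMem_empty i) hi
      choose w hw using this
      have hfw : f = fun i => formPoly (w i) := funext fun i => (hw i).symm
      rw [hfw]
      exact h w fun i hi => formPoly_injective ((hw i).trans (hf i hi))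
    | insert k s hk ih =>
      intro hs f hf hw
      rw [Finset.disjoint_insert_left] at hs
      -- in the slot `k`, modulo `I`, `θ` is a derivation which vanishes on the variables
      let D : Derivation K (MvPolynomial (Fin ℓ) K) (MvPolynomial (Fin ℓ) K) :=
        Derivation.mk' (θ.toMultilinearMap.toLinearMap f k) fun a b => by
          simpa using hθ k f a b
      have hD : (Submodule.mkQ I).compDer D = 0 := by
        refine MvPolynomial.derivation_ext fun i => ?_
        change Submodule.Quotient.mk (θ (Function.update f k (X i))) = 0
        rw [Submodule.Quotient.mk_eq_zero]
        refine ih hs.2 _ (fun j hj => ?_) (fun j hj hjT => ?_)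
        · have hjk : j ≠ k := by rintro rfl; exact hs.1 hj
          rw [Function.update_of_ne hjk]; exact hf j hj
        · by_cases hjk : j = k
          · subst hjk
            exact ⟨coordBasis K ℓ i, by rw [Function.update_self, formPoly_coordBasis]⟩
          · rw [Function.update_of_ne hjk]
            exact hw j (by simp [hjk, hj]) hjT
      have := DFunLike.congr_fun hD (f k)
      change Submodule.Quotient.mk (θ (Function.update f k (f k))) = 0 at this
      rwa [Submodule.Quotient.mk_eq_zero, Function.update_eq_self] at this
  exact key (Finset.univ \ T) Finset.sdiff_disjoint f hf
    (fun i hi hiT => absurd (by simp [hiT]) hi)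

/-- Restriction of an alternating map to linear forms. -/
def resForms (K : Type*) [Field K] (ℓ p : ℕ) :
    ((MvPolynomial (Fin ℓ) K) [⋀^Fin p]→ₗ[K] (MvPolynomial (Fin ℓ) K)) →ₗ[K] Alt K ℓ p where
  toFun θ := θ.compLinearMap (formLin K ℓ)
  map_add' _ _ := rfl
  map_smul' _ _ := rfl

lemma resForms_apply (θ : (MvPolynomial (Fin ℓ) K) [⋀^Fin p]→ₗ[K] (MvPolynomial (Fin ℓ) K))
    (w : Fin p → Lin K ℓ) : resForms K ℓ p θ w = θ fun i => formPoly (w i) := rfl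

/-- The multiderivation `(f_1,…,f_p) ↦ ∑_v a(x_{v 1},…,x_{v p}) ∏_j ∂f_j/∂x_{v j}` extending an
alternating form `a` on linear forms. -/
def toDer (a : Alt K ℓ p) :
    (MvPolynomial (Fin ℓ) K) [⋀^Fin p]→ₗ[K] (MvPolynomial (Fin ℓ) K) :=
  { ∑ v : Fin p → Fin ℓ, (a fun j => coordBasis K ℓ (v j)) •
      (MultilinearMap.mkPiAlgebra K (Fin p) (MvPolynomial (Fin ℓ) K)).compLinearMap
        fun j => (pderiv (R := K) (v j)).toLinearMap with
    map_eq_zero_of_eq' := by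
      intro f i j hf hij
      simp only [MultilinearMap.toFun_eq_coe, sum_apply, smul_apply,
        MultilinearMap.compLinearMap_apply, MultilinearMap.mkPiAlgebra_apply]
      refine Finset.sum_involution (fun v _ => v ∘ Equiv.swap i j) ?_ ?_ (by simp) ?_
      · intro v _
        have h1 : (a fun k => coordBasis K ℓ ((v ∘ Equiv.swap i j) k)) =
            -a fun k => coordBasis K ℓ (v k) :=
          a.map_swap (fun k => coordBasis K ℓ (v k)) hij
        have hf' : ∀ k, f (Equiv.swap i j k) = f k := fun k => by
          by_cases hki : k = i
          · subst hki; rw [Equiv.swap_apply_left, hf]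
          · by_cases hkj : k = j
            · subst hkj; rw [Equiv.swap_apply_right, hf]
            · rw [Equiv.swap_apply_of_ne_of_ne hki hkj]
        have h2 : ∏ k, (pderiv (R := K) ((v ∘ Equiv.swap i j) k)).toLinearMap (f k) =
            ∏ k, (pderiv (R := K) (v k)).toLinearMap (f k) := by
          rw [← Equiv.prod_comp (Equiv.swap i j)
            (fun k => (pderiv (R := K) (v k)).toLinearMap (f k))]
          exact Finset.prod_congr rfl fun k _ => by rw [hf']; rfl
        rw [h1, h2, neg_smul, add_neg_cancel]
      · intro v _ hne heq
        refine hne ?_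
        have : v i = v j := by
          have := congrFun heq j
          simpa using this
        rw [a.map_eq_zero_of_eq _ (by rw [this]) hij, zero_smul]
      · intro v _; funext k; simp }

lemma toDer_apply (a : Alt K ℓ p) (f : Fin p → MvPolynomial (Fin ℓ) K) :
    toDer a f = ∑ v : Fin p → Fin ℓ, (a fun j => coordBasis K ℓ (v j)) *
      ∏ j, pderiv (v j) (f j) := by
  change (∑ v : Fin p → Fin ℓ, (a fun j => coordBasis K ℓ (v j)) •
      (MultilinearMap.mkPiAlgebra K (Fin p) (MvPolynomial (Fin ℓ) K)).compLinearMap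
        fun j => (pderiv (R := K) (v j)).toLinearMap) f = _
  simp only [sum_apply, smul_apply,
        MultilinearMap.compLinearMap_apply, MultilinearMap.mkPiAlgebra_apply, smul_eq_mul]
  rfl

lemma isMultiDer_toDer (a : Alt K ℓ p) : IsMultiDer (toDer a) := by
  intro i v f g
  have h : ∀ (u : Fin p → Fin ℓ) (x : MvPolynomial (Fin ℓ) K),
      ∏ j, pderiv (u j) (Function.update v i x j) =
        pderiv (u i) x * ∏ j ∈ Finset.univ.erase i, pderiv (u j) (v j) := by
    intro u x
    rw [← Finset.mul_prod_erase _ _ (Finset.mem_univ i), Function.update_self]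
    congr 1
    refine Finset.prod_congr rfl fun j hj => ?_
    rw [Function.update_of_ne (Finset.ne_of_mem_erase hj)]
  simp only [toDer_apply, h, Finset.mul_sum, ← Finset.sum_add_distrib]
  refine Finset.sum_congr rfl fun u _ => ?_
  rw [Derivation.leibniz, smul_eq_mul, smul_eq_mul]
  ring

lemma resForms_toDer (a : Alt K ℓ p) : resForms K ℓ p (toDer a) = a := by
  refine (coordBasis K ℓ).ext_alternating fun u _ => ?_
  rw [resForms_apply, toDer_apply, Finset.sum_eq_single u]
  · simp [formPoly_coordBasis]
  · intro v _ hv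
    obtain ⟨j, hj⟩ := Function.ne_iff.mp hv
    rw [Finset.prod_eq_zero (Finset.mem_univ j), mul_zero]
    rw [formPoly_coordBasis, pderiv_X_of_ne hj.symm]
  · intro h; exact absurd (Finset.mem_univ u) h

lemma resForms_mem_gr_iff {A : MultiArr K ℓ} {e : ℕ}
    {θ : (MvPolynomial (Fin ℓ) K) [⋀^Fin p]→ₗ[K] (MvPolynomial (Fin ℓ) K)} (hθ : IsMultiDer θ) :
    resForms K ℓ p θ ∈ gr (Dform A.mult A.duals p) e ↔ θ ∈ DpGraded A p e := by
  constructor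
  · rintro ⟨h1, h2⟩
    refine ⟨⟨hθ, fun φ hφ v i hv => ?_⟩, fun v => ?_⟩
    · refine hθ.mem_of_forall_forms _ {i} (fun _ => φ) (fun w hw => ?_) v (by simpa using hv)
      exact h1 φ hφ w i (by simpa using hw)
    · simpa [resForms_apply, formPoly_coordBasis] using h2 fun j => coordBasis K ℓ (v j)
  · rintro ⟨h1, h2⟩
    refine ⟨fun φ hφ v i hv => h1.2 φ hφ _ i (congrArg formPoly hv), ?_⟩
    have : comp e (resForms K ℓ p θ) = resForms K ℓ p θ := by
      refine (coordBasis K ℓ).ext_alternating fun u _ => ?_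
      rw [comp_apply, resForms_apply]
      simp only [formPoly_coordBasis]
      exact homogeneousComponent_eq_self (h2 u)
    rw [← this]
    exact comp_mem_homog _ _

lemma resForms_injective {θ : (MvPolynomial (Fin ℓ) K) [⋀^Fin p]→ₗ[K] (MvPolynomial (Fin ℓ) K)}
    (hθ : IsMultiDer θ) (h : resForms K ℓ p θ = 0) : θ = 0 := by
  ext1 f
  have := hθ.mem_of_forall_forms ⊥ ∅ 0 (fun w _ => ?_) f (by simp)
  · simpa using this
  · rw [← resForms_apply, h]; exact zero_mem _

lemma hilb_eq_hs (A : MultiArr K ℓ) (p : ℕ) : hilb A p = hs (Dform A.mult A.duals p) := by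
  ext e
  simp only [hilb, hs, PowerSeries.coeff_mk, Nat.cast_inj]
  let F : DpGraded A p e →ₗ[K] gr (Dform A.mult A.duals p) e :=
    ((resForms K ℓ p).restrict fun θ hθ => (resForms_mem_gr_iff hθ.1.1).mpr hθ)
  refine (LinearEquiv.ofBijective F ⟨?_, ?_⟩).finrank_eq
  · rw [injective_iff_map_eq_zero]
    rintro ⟨θ, hθ⟩ h
    exact Subtype.ext (resForms_injective hθ.1.1 (congrArg Subtype.val h))
  · rintro ⟨a, ha⟩
    refine ⟨⟨toDer a, ?_⟩, Subtype.ext (resForms_toDer a)⟩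
    rw [← resForms_mem_gr_iff (isMultiDer_toDer a), resForms_toDer]
    exact ha

/-! ### Divisibility by powers of `t` -/

/-- The forms in `(D^p)_e` (with respect to the hyperplanes in `C`) which vanish as soon as one of
their arguments is in `T`. -/
def Gsp (m : Lin K ℓ → ℕ) (C : Finset (Lin K ℓ)) (T : Set (Lin K ℓ)) (p e : ℕ) :
    Submodule K (Alt K ℓ p) where
  carrier := {a | a ∈ gr (Dform m C p) e ∧ ∀ v i, v i ∈ T → a v = 0}
  add_mem' ha hb := ⟨add_mem ha.1 hb.1, fun v i h => by simp [ha.2 v i h, hb.2 v i h]⟩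
  zero_mem' := ⟨zero_mem _, fun v i h => rfl⟩
  smul_mem' c a ha := ⟨Submodule.smul_mem _ c ha.1, fun v i h => by simp [ha.2 v i h]⟩

lemma mem_Gsp {m : Lin K ℓ → ℕ} {C : Finset (Lin K ℓ)} {T : Set (Lin K ℓ)} {e : ℕ}
    {a : Alt K ℓ p} :
    a ∈ Gsp m C T p e ↔ (∀ φ ∈ C, ∀ (v : Fin p → Lin K ℓ) (i : Fin p), v i = φ →
      a v ∈ Ideal.span {formPoly φ ^ m φ}) ∧ (∀ v, (a v).IsHomogeneous e) ∧
      ∀ v i, v i ∈ T → a v = 0 := and_assoc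

lemma Gsp_le (m : Lin K ℓ → ℕ) (C : Finset (Lin K ℓ)) (T : Set (Lin K ℓ)) (p e : ℕ) :
    Gsp m C T p e ≤ homog K ℓ p e := fun _ ha => ha.1.2

instance (m : Lin K ℓ → ℕ) (C : Finset (Lin K ℓ)) (T : Set (Lin K ℓ)) (p e : ℕ) :
    Module.Finite K (Gsp m C T p e) :=
  Submodule.finiteDimensional_of_le (Gsp_le m C T p e)

/-- Exterior multiplication of `η` by the element `e₀` of `V`, viewed as a functional on linear
forms. -/
def wedge (e₀ : Fin ℓ → K) (η : Alt K ℓ p) : Alt K ℓ (p + 1) :=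
  AlternatingMap.alternatizeUncurryFin ((Module.Dual.eval K (Fin ℓ → K) e₀).smulRight η)

lemma wedge_apply (e₀ : Fin ℓ → K) (η : Alt K ℓ p) (v : Fin (p + 1) → Lin K ℓ) :
    wedge e₀ η v = ∑ i : Fin (p + 1),
      (-1 : ℤ) ^ (i : ℕ) • (v i e₀ • η (i.removeNth v)) := by
  simp [wedge, AlternatingMap.alternatizeUncurryFin_apply]

/-- At a tuple with an entry `v i` annihilated by `e₀`, the value of `e₀ ∧ η` only involves values
of `η` at tuples containing `v i`. -/
lemma wedge_apply_mem (e₀ : Fin ℓ → K) (η : Alt K ℓ p) (v : Fin (p + 1) → Lin K ℓ)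
    (i : Fin (p + 1)) (hi : v i e₀ = 0) (I : Submodule K (MvPolynomial (Fin ℓ) K))
    (h : ∀ w : Fin p → Lin K ℓ, (∃ j, w j = v i) → η w ∈ I) : wedge e₀ η v ∈ I := by
  rw [wedge_apply]
  refine Submodule.sum_mem _ fun k _ => zsmul_mem ?_ _
  by_cases hk : i = k
  · subst hk; rw [hi, zero_smul]; exact zero_mem _
  · obtain ⟨j, hj⟩ := Fin.exists_succAbove_eq hk
    exact Submodule.smul_mem _ _ (h _ ⟨j, by simp [Fin.removeNth, hj]⟩)

/-- If `x(e₀) = 1` and `e₀` annihilates `C` and `T`, contraction by `x` is surjective, with section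
`e₀ ∧ ·`, and its kernel consists of the forms vanishing on `x`. -/
lemma finrank_Gsp_succ (m : Lin K ℓ → ℕ) (C : Finset (Lin K ℓ)) (T : Set (Lin K ℓ)) (p e : ℕ)
    (x : Lin K ℓ) (e₀ : Fin ℓ → K) (hx : x e₀ = 1) (hC : ∀ φ ∈ C, φ e₀ = 0)
    (hT : ∀ φ ∈ T, φ e₀ = 0) :
    Module.finrank K (Gsp m C T (p + 1) e) =
      Module.finrank K (Gsp m C (insert x T) (p + 1) e) +
        Module.finrank K (Gsp m C (insert x T) p e) := by
  let F : Alt K ℓ (p + 1) →ₗ[K] Alt K ℓ p := AlternatingMap.curryLeftLinearMap.flip x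
  have hF : ∀ a v, F a v = a (Matrix.vecCons x v) := fun a v => rfl
  have hFm : ∀ a ∈ Gsp m C T (p + 1) e, F a ∈ Gsp m C (insert x T) p e := by
    intro a ha
    rw [mem_Gsp] at ha ⊢
    refine ⟨fun φ hφ v i hv => ha.1 φ hφ _ i.succ (by simpa using hv), fun v => ha.2.1 _, ?_⟩
    rintro v i (hi | hi)
    · exact a.map_eq_zero_of_eq _ (i := 0) (j := i.succ) (by simp [hi]) (Fin.succ_ne_zero i).symm
    · exact ha.2.2 _ i.succ (by simpa using hi)
  let f : Gsp m C T (p + 1) e →ₗ[K] Gsp m C (insert x T) p e := F.restrict hFm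
  have hker : (LinearMap.ker f).map (Gsp m C T (p + 1) e).subtype =
      Gsp m C (insert x T) (p + 1) e := by
    ext a
    constructor
    · rintro ⟨⟨b, hb⟩, hfb, rfl⟩
      have hFb : F b = 0 := congrArg Subtype.val (LinearMap.mem_ker.mp hfb)
      refine ⟨hb.1, ?_⟩
      rintro v i (hi | hi)
      · have h0 : b (v ∘ Equiv.swap 0 i) = 0 := by
          have h1 : v ∘ Equiv.swap 0 i =
              Matrix.vecCons x (Matrix.vecTail (v ∘ Equiv.swap 0 i)) := by
            rw [← hi]
            conv_lhs => rw [← Matrix.cons_head_tail (v ∘ Equiv.swap 0 i)]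
            simp [Matrix.vecHead]
          rw [h1, ← hF, hFb]; rfl
        rw [AlternatingMap.map_perm] at h0
        exact (smul_eq_zero_iff_eq _).mp h0
      · exact hb.2 v i hi
    · intro ha
      have ha' : a ∈ Gsp m C T (p + 1) e :=
        ⟨ha.1, fun v i hi => ha.2 v i (Set.mem_insert_of_mem _ hi)⟩
      refine ⟨⟨a, ha'⟩, LinearMap.mem_ker.mpr (Subtype.ext ?_), rfl⟩
      ext1 v
      exact ha.2 _ 0 (Set.mem_insert _ _)
  have hsurj : Function.Surjective f := by
    rintro ⟨η, hη⟩
    have hη' := mem_Gsp.mp hη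
    refine ⟨⟨wedge e₀ η, mem_Gsp.mpr ⟨?_, ?_, ?_⟩⟩, Subtype.ext ?_⟩
    · rintro φ hφ v i rfl
      exact wedge_apply_mem e₀ η v i (hC _ hφ)
        ((Ideal.span {formPoly (v i) ^ m (v i)}).restrictScalars K)
        fun w ⟨j, hj⟩ => hη'.1 _ hφ w j hj
    · intro v
      rw [wedge_apply]
      exact Submodule.sum_mem (homogeneousSubmodule (Fin ℓ) K e) fun k _ =>
        zsmul_mem (Submodule.smul_mem _ _ (hη'.2.1 _)) _
    · intro v i hi
      simpa using wedge_apply_mem e₀ η v i (hT _ hi) ⊥ fun w ⟨j, hj⟩ => by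
        simpa using hη'.2.2 w j (hj ▸ Set.mem_insert_of_mem _ hi)
    · change F (wedge e₀ η) = η
      ext1 v
      rw [hF, wedge_apply, Fin.sum_univ_succ, Finset.sum_eq_zero]
      · simp [hx]
      · intro k _
        have : η (k.succ.removeNth (Matrix.vecCons x v)) = 0 := by
          obtain ⟨j, hj⟩ := Fin.exists_succAbove_eq (Fin.succ_ne_zero k).symm
          refine hη'.2.2 _ j (Or.inl ?_)
          simp [Fin.removeNth, hj]
        rw [this]; simp
  have h1 := LinearMap.finrank_range_add_finrank_ker (K := K) (V := Gsp m C T (p + 1) e)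
    (V₂ := Gsp m C (insert x T) p e) f
  rw [LinearMap.range_eq_top.mpr hsurj, finrank_top] at h1
  rw [← h1, add_comm, ← hker, Submodule.finrank_map_subtype_eq]

lemma Gsp_zero (m : Lin K ℓ → ℕ) (C : Finset (Lin K ℓ)) (T T' : Set (Lin K ℓ)) (e : ℕ) :
    Gsp m C T 0 e = Gsp m C T' 0 e := by
  ext a
  simp [mem_Gsp]

lemma finrank_Gsp_top (m : Lin K ℓ → ℕ) (C : Finset (Lin K ℓ)) (T : Set (Lin K ℓ)) (e : ℕ) :
    Module.finrank K (Gsp m C T (ℓ + 1) e) = 0 := by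
  have : Gsp m C T (ℓ + 1) e = ⊥ := by
    rw [eq_bot_iff]
    intro a _
    rw [Submodule.mem_bot]
    ext1 v
    refine a.map_linearDependent v fun h => ?_
    have := h.fintype_card_le_finrank
    rw [Subspace.dual_finrank_eq] at this
    simp at this
  rw [this, finrank_bot]

/-- The generating polynomial `∑_p dim (Gsp)_p y^p` of the spaces `Gsp`, in the variable
`t = y + 1`. -/
def gpoly (m : Lin K ℓ → ℕ) (C : Finset (Lin K ℓ)) (T : Set (Lin K ℓ)) (e : ℕ) :
    Polynomial ℤ :=
  ∑ p ∈ Finset.range (ℓ + 1),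
    (Module.finrank K (Gsp m C T p e) : Polynomial ℤ) * (Polynomial.X - 1) ^ p

lemma gpoly_eq_X_mul (m : Lin K ℓ → ℕ) (C : Finset (Lin K ℓ)) (T : Set (Lin K ℓ)) (e : ℕ)
    (x : Lin K ℓ) (e₀ : Fin ℓ → K) (hx : x e₀ = 1) (hC : ∀ φ ∈ C, φ e₀ = 0)
    (hT : ∀ φ ∈ T, φ e₀ = 0) :
    gpoly m C T e = Polynomial.X * gpoly m C (insert x T) e := by
  have htop : Module.finrank K (Gsp m C (insert x T) ℓ e) = 0 := by
    have := finrank_Gsp_succ m C T ℓ e x e₀ hx hC hT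
    rw [finrank_Gsp_top] at this
    omega
  have h2 : gpoly m C (insert x T) e = ∑ p ∈ Finset.range ℓ,
      (Module.finrank K (Gsp m C (insert x T) p e) : Polynomial ℤ) * (Polynomial.X - 1) ^ p := by
    rw [gpoly, Finset.sum_range_succ, htop]; simp
  have h3 : gpoly m C (insert x T) e = (∑ p ∈ Finset.range ℓ,
      (Module.finrank K (Gsp m C (insert x T) (p + 1) e) : Polynomial ℤ) *
        (Polynomial.X - 1) ^ (p + 1)) + (Module.finrank K (Gsp m C (insert x T) 0 e)) := by
    rw [gpoly, Finset.sum_range_succ']; simp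
  have h4 : gpoly m C T e = gpoly m C (insert x T) e +
      (Polynomial.X - 1) * gpoly m C (insert x T) e := by
    nth_rewrite 2 [h2]
    rw [h3, gpoly, Finset.sum_range_succ', Gsp_zero m C T (insert x T), Finset.mul_sum,
      add_right_comm, ← Finset.sum_add_distrib]
    congr 1
    · refine Finset.sum_congr rfl fun p _ => ?_
      rw [finrank_Gsp_succ m C T p e x e₀ hx hC hT]
      push_cast
      ring
    · simp
  rw [h4]; ring

lemma X_pow_dvd_gpoly (m : Lin K ℓ → ℕ) (C : Finset (Lin K ℓ)) (e : ℕ) {d : ℕ}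
    (x : Fin d → Lin K ℓ) (b : Fin d → Fin ℓ → K) (hxb : ∀ i j, x i (b j) = if i = j then 1 else 0)
    (hC : ∀ φ ∈ C, ∀ j, φ (b j) = 0) (s : Finset (Fin d)) :
    gpoly m C ∅ e = Polynomial.X ^ s.card * gpoly m C (Set.image x s) e := by
  induction s using Finset.induction_on with
  | empty => simp
  | insert i s hi ih =>
    rw [ih, Finset.card_insert_of_notMem hi, Finset.coe_insert, Set.image_insert_eq, pow_succ,
      mul_assoc, gpoly_eq_X_mul m C (Set.image x s) e (x i) (b i) (by simp [hxb]) (fun φ hφ => hC φ hφ i)]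
    rintro _ ⟨j, hj, rfl⟩
    rw [hxb, if_neg]
    rintro rfl
    exact hi hj

/-- The centre `⋂_{φ ∈ B} ker φ` of a finite set of linear forms. -/
def center (B : Finset (Lin K ℓ)) : Submodule K (Fin ℓ → K) := ⨅ φ ∈ B, LinearMap.ker φ

lemma mem_center {B : Finset (Lin K ℓ)} {v : Fin ℓ → K} : v ∈ center B ↔ ∀ φ ∈ B, φ v = 0 := by
  simp [center]

lemma finrank_span_add_finrank_center (B : Finset (Lin K ℓ)) :
    Module.finrank K (Submodule.span K (B : Set (Lin K ℓ))) + Module.finrank K (center B) = ℓ := by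
  have h : center B = (Submodule.span K (B : Set (Lin K ℓ))).dualCoannihilator := by
    ext v
    rw [mem_center, Submodule.mem_dualCoannihilator]
    refine ⟨fun h φ hφ => ?_, fun h φ hφ => h φ (Submodule.subset_span hφ)⟩
    induction hφ using Submodule.span_induction with
    | mem φ hφ => exact h φ hφ
    | zero => rfl
    | add φ ψ _ _ h1 h2 => simp [h1, h2]
    | smul c φ _ h1 => simp [h1]
  rw [h, Subspace.finrank_add_finrank_dualCoannihilator_eq]
  simp

lemma finrank_center_le (B : Finset (Lin K ℓ)) : Module.finrank K (center B) ≤ ℓ := by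
  have := finrank_span_add_finrank_center B
  omega

lemma coeff_gpoly (m : Lin K ℓ → ℕ) (C : Finset (Lin K ℓ)) (e k : ℕ) :
    (gpoly m C ∅ e).coeff k = ∑ p ∈ Finset.range (ℓ + 1),
      (Module.finrank K (gr (Dform m C p) e) : ℤ) *
        ((Polynomial.X - 1 : Polynomial ℤ) ^ p).coeff k := by
  rw [gpoly, Polynomial.finsetSum_coeff]
  refine Finset.sum_congr rfl fun p _ => ?_
  have : Gsp m C ∅ p e = gr (Dform m C p) e := by
    ext a; simp [Gsp]
  rw [this, ← Polynomial.C_eq_natCast, Polynomial.coeff_C_mul]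

/-- The coefficients of `t^k` in `Σ_p H(D^p(C)) (t-1)^p` vanish for `k` smaller than the dimension
of the centre of a set `B ⊇ C`. -/
lemma sum_hs_mul_eq_zero (m : Lin K ℓ → ℕ) {C B : Finset (Lin K ℓ)} (hCB : C ⊆ B) {k : ℕ}
    (hk : k < Module.finrank K (center B)) :
    ∑ p ∈ Finset.range (ℓ + 1), hs (Dform m C p) *
      (((Polynomial.X - 1 : Polynomial ℤ) ^ p).coeff k : PowerSeries ℤ) = 0 := by
  ext e
  let b := Module.finBasis K (center B)
  choose x hx using fun i => LinearMap.exists_extend (b.coord i)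
  have hdvd : Polynomial.X ^ Module.finrank K (center B) ∣ gpoly m C ∅ e := by
    have := X_pow_dvd_gpoly m C e x (fun j => (b j : Fin ℓ → K)) (fun i j => ?_)
      (fun φ hφ j => mem_center.mp (b j).2 φ (hCB hφ)) Finset.univ
    · rw [Finset.card_univ, Fintype.card_fin] at this
      exact ⟨_, this⟩
    · have := LinearMap.congr_fun (hx i) (b j)
      simpa [Finsupp.single_apply, eq_comm] using this
  have := Polynomial.X_pow_dvd_iff.mp hdvd k hk
  rw [coeff_gpoly] at this
  rw [map_sum, map_zero, ← this]
  refine Finset.sum_congr rfl fun p _ => ?_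
  rw [← map_intCast (PowerSeries.C (R := ℤ)), PowerSeries.coeff_mul_C, hs, PowerSeries.coeff_mk,
    Int.cast_id]

/-! ### Inclusion–exclusion -/

/-- The coefficient of `t^k` in `ψ(t,q)`, for the subset `C` of a multiarrangement with
multiplicity `m`. -/
def psiPart (m : Lin K ℓ → ℕ) (k : ℕ) (C : Finset (Lin K ℓ)) : PowerSeries ℤ :=
  (∑ p ∈ Finset.range (ℓ + 1), hs (Dform m C p) *
    (((Polynomial.X - 1 : Polynomial ℤ) ^ p).coeff k : PowerSeries ℤ)) * (PowerSeries.X - 1) ^ k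

lemma coeff_psi (A : MultiArr K ℓ) (k : ℕ) : (psi A).coeff k = psiPart A.mult k A.duals := by
  rw [psi, Polynomial.finsetSum_coeff, psiPart, Finset.sum_mul]
  refine Finset.sum_congr rfl fun p _ => ?_
  have h : (Polynomial.C ((PowerSeries.X : PowerSeries ℤ) - 1) * Polynomial.X - 1) ^ p =
      (((Polynomial.X - 1 : Polynomial ℤ) ^ p).map (Int.castRingHom (PowerSeries ℤ))).comp
        (Polynomial.C ((PowerSeries.X : PowerSeries ℤ) - 1) * Polynomial.X) := by
    simp
  rw [Polynomial.coeff_C_mul, h, Polynomial.comp_C_mul_X_coeff, Polynomial.coeff_map, hilb_eq_hs]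
  simp [mul_assoc]

/-- The inclusion–exclusion transform of `psiPart` is a polynomial, and it vanishes at `q = 1`
unless `k` is the dimension of the centre. -/
lemma exists_poly_sum_psiPart (m : Lin K ℓ → ℕ) (k : ℕ) (B : Finset (Lin K ℓ)) :
    ∃ Q : Polynomial ℤ, Polynomial.coeToPowerSeries.ringHom Q =
        ∑ C ∈ B.powerset, (-1) ^ C.card * psiPart m k C ∧
      (Module.finrank K (center B) ≠ k → Q.eval 1 = 0) := by
  rcases lt_or_ge k (Module.finrank K (center B)) with hk | hk
  · refine ⟨0, ?_, fun _ => by simp⟩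
    rw [map_zero, Finset.sum_eq_zero]
    intro C hC
    rw [psiPart, sum_hs_mul_eq_zero m (Finset.mem_powerset.mp hC) hk]
    simp
  · obtain ⟨j, hj⟩ := Nat.exists_eq_add_of_le hk
    have hpol := fun p => sum_hs_Dform_mul_mem_polys (p := p) m B (Module.finrank K (center B))
      (finrank_span_add_finrank_center B).ge
    choose P hP using hpol
    refine ⟨(∑ p ∈ Finset.range (ℓ + 1),
      Polynomial.C (((Polynomial.X - 1 : Polynomial ℤ) ^ p).coeff k) * P p) *
        ((-1) ^ k * (1 - Polynomial.X) ^ j), ?_, fun hne => ?_⟩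
    · have h1 : (PowerSeries.X - 1 : PowerSeries ℤ) ^ k =
          (1 - PowerSeries.X) ^ Module.finrank K (center B) *
            ((-1) ^ k * (1 - PowerSeries.X) ^ j) := by
        rw [mul_left_comm, ← pow_add, ← hj, ← mul_pow]
        congr 1
        ring
      simp only [psiPart, h1, map_mul, map_sum, hP]
      simp only [Polynomial.coeToPowerSeries.ringHom_apply, Polynomial.coe_C, Polynomial.coe_pow,
        Polynomial.coe_sub, Polynomial.coe_X, Polynomial.coe_one, Polynomial.coe_neg]
      simp only [← mul_assoc, Finset.sum_mul, Finset.mul_sum]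
      rw [Finset.sum_comm]
      refine Finset.sum_congr rfl fun C _ => Finset.sum_congr rfl fun p _ => ?_
      rw [← map_intCast (PowerSeries.C (R := ℤ)), Int.cast_id]
      ring
    · have : j ≠ 0 := by rintro rfl; exact hne (by omega)
      simp [this]

/-- Inclusion–exclusion over the subsets of a finite set is an involution. -/
lemma sum_powerset_involution {α R : Type*} [CommRing R] (A : Finset α) :
    ∀ f : Finset α → R, ∑ B ∈ A.powerset, (-1) ^ B.card *
      ∑ C ∈ B.powerset, (-1) ^ C.card * f C = f A := by
  induction A using Finset.induction_on with
  | empty => simp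
  | insert a A ha ih =>
    intro f
    rw [Finset.sum_powerset_insert ha, ih, ← ih fun C => f (insert a C)]
    have h : ∀ B ∈ A.powerset, (-1 : R) ^ (insert a B).card *
        ∑ C ∈ (insert a B).powerset, (-1) ^ C.card * f C =
        (-1) ^ B.card * ∑ C ∈ B.powerset, (-1) ^ C.card * f (insert a C) -
          (-1) ^ B.card * ∑ C ∈ B.powerset, (-1) ^ C.card * f C := by
      intro B hB
      have haB : a ∉ B := fun h => ha (Finset.mem_powerset.mp hB h)
      have h2 : ∑ C ∈ B.powerset, (-1 : R) ^ (insert a C).card * f (insert a C) =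
          -∑ C ∈ B.powerset, (-1) ^ C.card * f (insert a C) := by
        rw [← Finset.sum_neg_distrib]
        refine Finset.sum_congr rfl fun C hC => ?_
        rw [Finset.card_insert_of_notMem fun h => haB (Finset.mem_powerset.mp hC h)]
        ring
      rw [Finset.sum_powerset_insert haB, Finset.card_insert_of_notMem haB, h2]
      ring
    rw [Finset.sum_congr rfl h, Finset.sum_sub_distrib, ih f]
    ring

/-- The value at `q = 1` of the inclusion–exclusion transform of `psiPart`. -/
def weight (m : Lin K ℓ → ℕ) (k : ℕ) (B : Finset (Lin K ℓ)) : ℤ :=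
  (exists_poly_sum_psiPart m k B).choose.eval 1

lemma weight_eq_zero {m : Lin K ℓ → ℕ} {k : ℕ} {B : Finset (Lin K ℓ)}
    (h : Module.finrank K (center B) ≠ k) : weight m k B = 0 :=
  (exists_poly_sum_psiPart m k B).choose_spec.2 h

/-- The coefficients of `ψ(t,1)` are sums over subsets `B` of contributions which are supported on
the `B` whose centre has dimension `k`, and which depend only on `m`, `k` and `B`. -/
lemma psiAtOne_eq_sum (A : MultiArr K ℓ) (k : ℕ) :
    psiAtOne A k = ∑ B ∈ A.duals.powerset, (-1) ^ B.card * weight A.mult k B := by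
  have hP : Polynomial.coeToPowerSeries.ringHom (∑ B ∈ A.duals.powerset, (-1) ^ B.card *
      (exists_poly_sum_psiPart A.mult k B).choose) = (psi A).coeff k := by
    rw [coeff_psi, ← sum_powerset_involution A.duals (psiPart A.mult k), map_sum]
    refine Finset.sum_congr rfl fun B _ => ?_
    rw [map_mul, (exists_poly_sum_psiPart A.mult k B).choose_spec.1, map_pow, map_neg, map_one]
  have hex : ∃ f : Polynomial ℤ,
      Polynomial.coeToPowerSeries.ringHom f = (psi A).coeff k := ⟨_, hP⟩
  have heq : psiQCoeff A k = ∑ B ∈ A.duals.powerset, (-1) ^ B.card *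
      (exists_poly_sum_psiPart A.mult k B).choose := by
    rw [psiQCoeff, dif_pos hex]
    exact Polynomial.coe_injective ℤ (hex.choose_spec.trans hP.symm)
  rw [psiAtOne, heq, Polynomial.eval_finsetSum]
  simp [weight]

/-- **Main Theorem.** For every `X ∈ L(𝒜)` and every `0 ≤ p ≤ r(X)`,
`C_p(X) = Σ_{Y ∈ L(𝒜_X)_p} C_p(Y)`. -/
theorem Cp_local_global (A : MultiArr K ℓ) (X : Submodule K (Fin ℓ → K))
    (hX : X ∈ LSet A) :
    ∀ p : ℕ, p ≤ rk X →
      CpCoeff (restrictArr A X) p =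
        ∑ Y ∈ (LSet (restrictArr A X)).filter (fun Y => rk Y = p),
          CpCoeff (restrictArr A Y) p := by
  intro p hp
  have hpl : p ≤ ℓ := hp.trans (Nat.sub_le _ _)
  set W : Finset (Lin K ℓ) → ℤ := fun B =>
    (-1) ^ (ℓ - p) * ((-1) ^ B.card * weight A.mult (ℓ - p) B) with hWdef
  have hW : ∀ B, Module.finrank K (center B) ≠ ℓ - p → W B = 0 := fun B hB => by
    simp [hWdef, weight_eq_zero hB]
  have hC : ∀ Z, CpCoeff (restrictArr A Z) p =
      ∑ B ∈ (restrictArr A Z).duals.powerset, W B := fun Z => by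
    rw [CpCoeff, psiAtOne_eq_sum, Finset.mul_sum]
    rfl
  have hmem : ∀ Z φ, φ ∈ (restrictArr A Z).duals ↔ φ ∈ A.duals ∧ Z ≤ LinearMap.ker φ :=
    fun Z φ => Finset.mem_filter
  -- For `Y` of rank `p`, only the `B ⊆ 𝒜_Y` with centre exactly `Y` contribute.
  have hY : ∀ Y ∈ (LSet (restrictArr A X)).filter (fun Y => rk Y = p),
      CpCoeff (restrictArr A Y) p =
        ∑ B ∈ ((restrictArr A X).duals.powerset.filter fun B => rk (center B) = p).filter
          (fun B => center B = Y), W B := by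
    intro Y hYmem
    obtain ⟨hYL, hYp⟩ := Finset.mem_filter.mp hYmem
    obtain ⟨B₀, hB₀, hB₀Y⟩ := Finset.mem_image.mp hYL
    have hXY : X ≤ Y := by
      rw [← hB₀Y]
      exact le_iInf₂ fun φ hφ => ((hmem _ _).mp (Finset.mem_powerset.mp hB₀ hφ)).2
    have hYdim : Module.finrank K Y = ℓ - p := by
      have h1 : Module.finrank K Y ≤ ℓ := by
        rw [← hB₀Y]; exact finrank_center_le B₀
      have h2 : ℓ - Module.finrank K Y = p := hYp
      omega
    rw [hC]
    symm
    refine Finset.sum_subset (fun B hB => ?_) (fun B hB hB' => hW B fun hdim => hB' ?_)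
    · simp only [Finset.mem_filter, Finset.mem_powerset] at hB ⊢
      obtain ⟨⟨hBX, -⟩, rfl⟩ := hB
      exact fun φ hφ => (hmem _ _).mpr ⟨((hmem _ _).mp (hBX hφ)).1, iInf₂_le φ hφ⟩
    · rw [Finset.mem_powerset] at hB
      have hYc : Y = center B := Submodule.eq_of_le_of_finrank_eq
        (le_iInf₂ fun φ hφ => ((hmem _ _).mp (hB hφ)).2) (hYdim.trans hdim.symm)
      simp only [Finset.mem_filter, Finset.mem_powerset]
      refine ⟨⟨fun φ hφ => ?_, hYc ▸ hYp⟩, hYc.symm⟩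
      exact (hmem _ _).mpr ⟨((hmem _ _).mp (hB hφ)).1, hXY.trans ((hmem _ _).mp (hB hφ)).2⟩
  rw [Finset.sum_congr rfl hY, Finset.sum_fiberwise_of_maps_to, hC]
  · symm
    refine Finset.sum_subset (Finset.filter_subset _ _) fun B hB hB' => hW B fun hdim => hB' ?_
    refine Finset.mem_filter.mpr ⟨hB, ?_⟩
    rw [rk, hdim]
    omega
  · intro B hB
    rw [Finset.mem_filter] at hB ⊢
    exact ⟨Finset.mem_image_of_mem _ hB.1, hB.2⟩
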